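/- Let μ = L*_α(ν, γ) be the distribution on ℝ^d with characteristic exponent C(z) = i⟨γ,z⟩ + ∫_{ℝ^d} ∫_0^1 (e^{ir⟨z,y⟩} - 1)(-log r)^(α-1) r^(-1) dr ν(dy), where ν is a finite measure with ∫ |y|^2 ν(dy) < ∞. Then X ~ μ has mean E[X] = γ + Γ(α) ∫_{ℝ^d} y ν(dy) and covariance matrix cov(X) = (Γ(α)/2^α) ∫_{ℝ^d} y yᵀ ν(dy). -/

import Mathlib

open MeasureTheory Real Complex
open scoped RealInnerProductSpace ENNReal

lemma aux_sin (s t : ℝ) (ht : t ≠ 0) : Real.sin (t * s) / t = s * Real.sinc (t * s) := by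
  by_cases hs : s = 0
  · simp [hs]
  · rw [Real.sinc_of_ne_zero (by positivity)]
    field_simp

lemma aux_cos (s t : ℝ) (ht : t ≠ 0) :
    2 * (1 - Real.cos (t * s)) / t ^ 2 = s ^ 2 * Real.sinc (t * s / 2) ^ 2 := by
  by_cases hs : s = 0
  · simp [hs]
  · rw [Real.sinc_of_ne_zero (by positivity)]
    have h := Real.cos_sq (t * s / 2)
    have h2 := Real.sin_sq (t * s / 2)
    rw [show 2 * (t * s / 2) = t * s by ring] at h
    rw [div_pow, h2, h]
    field_simp
    ring

/-- the sequence of times -/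
noncomputable def tt (n : ℕ) : ℝ := 1 / ((n : ℝ) + 1)

lemma tt_pos (n : ℕ) : 0 < tt n := by unfold tt; positivity

lemma tt_lim : Filter.Tendsto tt Filter.atTop (nhds 0) :=
  tendsto_one_div_add_atTop_nhds_zero_nat

lemma lim_sinc {u : ℕ → ℝ} (hu : Filter.Tendsto u Filter.atTop (nhds 0)) :
    Filter.Tendsto (fun n => Real.sinc (u n)) Filter.atTop (nhds 1) := by
  have := (Real.continuous_sinc.tendsto 0).comp hu
  rwa [Real.sinc_zero] at this

lemma lim_ptsin (s : ℝ) :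
    Filter.Tendsto (fun n => Real.sin (tt n * s) / tt n) Filter.atTop (nhds s) := by
  simp_rw [fun n => aux_sin s (tt n) (tt_pos n).ne']
  have := (lim_sinc (u := fun n => tt n * s) (by simpa using tt_lim.mul_const s)).const_mul s
  simpa using this

lemma lim_ptcos (s : ℝ) :
    Filter.Tendsto (fun n => 2 * (1 - Real.cos (tt n * s)) / tt n ^ 2) Filter.atTop
      (nhds (s ^ 2)) := by
  simp_rw [fun n => aux_cos s (tt n) (tt_pos n).ne']
  have := ((lim_sinc (u := fun n => tt n * s / 2)
    (by simpa using (tt_lim.mul_const s).div_const 2)).pow 2).const_mul (s ^ 2)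
  simpa using this

section
variable {X : Type*} [MeasurableSpace X] (ρ : Measure X) (g : X → ℝ)

lemma lim_sin (hg : Measurable g) (hi : Integrable g ρ) :
    Filter.Tendsto (fun n => (∫ x, Real.sin (tt n * g x) ∂ρ) / tt n) Filter.atTop
      (nhds (∫ x, g x ∂ρ)) := by
  simp_rw [← integral_div]
  refine tendsto_integral_of_dominated_convergence (fun x => |g x|) (fun n => ?_) hi.abs
    (fun n => ?_) ?_
  · exact (Measurable.aestronglyMeasurable (by fun_prop))
  · filter_upwards with x
    rw [aux_sin _ _ (tt_pos n).ne', Real.norm_eq_abs, abs_mul]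
    exact mul_le_of_le_one_right (abs_nonneg _) (Real.abs_sinc_le_one _)
  · filter_upwards with x using lim_ptsin _

lemma lim_cos (hg : Measurable g) (hi : Integrable (fun x => g x ^ 2) ρ) :
    Filter.Tendsto (fun n => 2 * (∫ x, (1 - Real.cos (tt n * g x)) ∂ρ) / tt n ^ 2) Filter.atTop
      (nhds (∫ x, g x ^ 2 ∂ρ)) := by
  simp_rw [← integral_const_mul, ← integral_div]
  refine tendsto_integral_of_dominated_convergence (fun x => g x ^ 2) (fun n => ?_) hi
    (fun n => ?_) ?_
  · exact (Measurable.aestronglyMeasurable (by fun_prop))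
  · filter_upwards with x
    rw [aux_cos _ _ (tt_pos n).ne', Real.norm_eq_abs, abs_of_nonneg (by positivity)]
    refine mul_le_of_le_one_right (by positivity) ?_
    rw [sq_le_one_iff_abs_le_one]
    exact Real.abs_sinc_le_one _
  · filter_upwards with x using lim_ptcos _

lemma fatou_cos [IsFiniteMeasure ρ] (hg : Measurable g) (c : ℝ)
    (h : Filter.Tendsto (fun n => 2 * (∫ x, (1 - Real.cos (tt n * g x)) ∂ρ) / tt n ^ 2)
      Filter.atTop (nhds c)) : Integrable (fun x => g x ^ 2) ρ := by
  simp_rw [← integral_const_mul, ← integral_div] at h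
  have hnn : ∀ n x, 0 ≤ 2 * (1 - Real.cos (tt n * g x)) / tt n ^ 2 := by
    intro n x
    rw [aux_cos _ _ (tt_pos n).ne']; positivity
  refine ⟨Measurable.aestronglyMeasurable (by fun_prop), ?_⟩
  rw [hasFiniteIntegral_iff_ofReal (by filter_upwards with x using by positivity)]
  have e1 : ∀ x, ENNReal.ofReal (g x ^ 2) = Filter.liminf (fun n =>
      ENNReal.ofReal (2 * (1 - Real.cos (tt n * g x)) / tt n ^ 2)) Filter.atTop := by
    intro x
    exact ((ENNReal.tendsto_ofReal (lim_ptcos (g x))).liminf_eq).symm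
  simp_rw [e1]
  refine (lintegral_liminf_le (fun n => by fun_prop)).trans_lt ?_
  have e2 : ∀ n, ∫⁻ x, ENNReal.ofReal (2 * (1 - Real.cos (tt n * g x)) / tt n ^ 2) ∂ρ
      = ENNReal.ofReal (∫ x, 2 * (1 - Real.cos (tt n * g x)) / tt n ^ 2 ∂ρ) := by
    intro n
    rw [ofReal_integral_eq_lintegral_ofReal]
    · refine Integrable.div_const (Integrable.const_mul ((integrable_const _).sub ?_) _) _
      refine Integrable.of_bound (Measurable.aestronglyMeasurable (by fun_prop)) 1 ?_
      filter_upwards with x using Real.abs_cos_le_one _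
    · filter_upwards with x using hnn n x
  simp_rw [e2]
  rw [(ENNReal.tendsto_ofReal h).liminf_eq]
  exact ENNReal.ofReal_lt_top

end

lemma lim_R {R : ℕ → ℝ} {v : ℝ}
    (h : Filter.Tendsto (fun n => 2 * (-R n) / tt n ^ 2) Filter.atTop (nhds v)) :
    Filter.Tendsto R Filter.atTop (nhds 0) ∧
    Filter.Tendsto (fun n => 2 * (1 - Real.exp (R n)) / tt n ^ 2) Filter.atTop (nhds v) := by
  have h0 : Filter.Tendsto R Filter.atTop (nhds 0) := by
    have := (h.mul (tt_lim.pow 2)).mul_const (-1/2)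
    simp only [ne_eq, OfNat.ofNat_ne_zero, not_false_eq_true, zero_pow, mul_zero, zero_mul] at this
    refine this.congr (fun n => ?_)
    have := (tt_pos n).ne'
    field_simp
  refine ⟨h0, ?_⟩
  have hd : ContinuousAt (dslope Real.exp 0) 0 :=
    continuousAt_dslope_same.2 Real.differentiable_exp.differentiableAt
  have h1 := h.mul (hd.tendsto.comp h0)
  rw [dslope_same] at h1
  simp only [Real.deriv_exp, Real.exp_zero, mul_one] at h1
  refine h1.congr (fun n => ?_)
  have e := sub_smul_dslope Real.exp 0 (R n)
  simp only [sub_zero, smul_eq_mul, Real.exp_zero] at e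
  simp only [Function.comp]
  rw [show 1 - Real.exp (R n) = -(R n * dslope Real.exp 0 (R n)) by rw [e]; ring]
  ring

lemma lim_main {R J : ℕ → ℝ} {v M : ℝ}
    (h : Filter.Tendsto (fun n => 2 * (-R n) / tt n ^ 2) Filter.atTop (nhds v))
    (hJ : Filter.Tendsto (fun n => J n / tt n) Filter.atTop (nhds M)) :
    Filter.Tendsto (fun n => Real.exp (R n) * Real.sin (J n) / tt n) Filter.atTop (nhds M) ∧
    Filter.Tendsto (fun n => 2 * (1 - Real.exp (R n) * Real.cos (J n)) / tt n ^ 2)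
      Filter.atTop (nhds (v + M ^ 2)) := by
  obtain ⟨hR0, hR⟩ := lim_R h
  have hE : Filter.Tendsto (fun n => Real.exp (R n)) Filter.atTop (nhds 1) := by
    simpa using hR0.rexp
  have hJ0 : Filter.Tendsto J Filter.atTop (nhds 0) := by
    have := hJ.mul tt_lim
    rw [mul_zero] at this
    refine this.congr (fun n => ?_)
    have := (tt_pos n).ne'
    field_simp
  constructor
  · have := hE.mul (hJ.mul (lim_sinc hJ0))
    simp only [mul_one, one_mul] at this
    refine this.congr (fun n => ?_)
    have e := aux_sin (J n) 1 one_ne_zero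
    simp only [one_mul, div_one] at e
    rw [e]; ring
  · have := hR.add (hE.mul ((hJ.pow 2).mul
      ((lim_sinc (u := fun n => J n / 2) (by simpa using hJ0.div_const 2)).pow 2)))
    simp only [mul_one, one_mul, one_pow] at this
    refine this.congr (fun n => ?_)
    have e := aux_cos (J n) 1 one_ne_zero
    simp only [one_mul, div_one, one_pow] at e
    have : (J n / tt n) ^ 2 * Real.sinc (J n / 2) ^ 2 = 2 * (1 - Real.cos (J n)) / tt n ^ 2 := by
      rw [e]; ring
    rw [this]; ring

/-- Abstract one-dimensional statement. -/
lemma oneD {X Y : Type*} [MeasurableSpace X] [MeasurableSpace Y] (μ : Measure X)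
    [IsProbabilityMeasure μ] (ρ : Measure Y) (f : X → ℝ) (g : Y → ℝ) (hf : Measurable f)
    (hg : Measurable g) (hg1 : Integrable g ρ) (hg2 : Integrable (fun y => g y ^ 2) ρ) (a : ℝ)
    (hchar : ∀ t : ℝ, (∫ x, Complex.exp ((t * f x : ℝ) * Complex.I) ∂μ) =
      Complex.exp ((t * a : ℝ) * Complex.I +
        ∫ y, (Complex.exp ((t * g y : ℝ) * Complex.I) - 1) ∂ρ)) :
    Integrable (fun x => f x ^ 2) μ ∧ Integrable f μ ∧ ∫ x, f x ∂μ = a + ∫ y, g y ∂ρ ∧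
      ∫ x, f x ^ 2 ∂μ = ∫ y, g y ^ 2 ∂ρ + (a + ∫ y, g y ∂ρ) ^ 2 := by
  have hint : ∀ t : ℝ, Integrable (fun y => Complex.exp ((t * g y : ℝ) * Complex.I) - 1) ρ := by
    intro t
    refine Integrable.mono' ((hg1.const_mul t).abs) (Measurable.aestronglyMeasurable (by fun_prop)) ?_
    filter_upwards with y
    have := Real.norm_exp_I_mul_ofReal_sub_one_le (x := t * g y)
    rwa [mul_comm Complex.I] at this
  have hintμ : ∀ t : ℝ, Integrable (fun x => Complex.exp ((t * f x : ℝ) * Complex.I)) μ := by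
    intro t
    refine Integrable.of_bound (Measurable.aestronglyMeasurable (by fun_prop)) 1 ?_
    filter_upwards with x
    rw [Complex.norm_exp_ofReal_mul_I]
  have hre : ∀ t : ℝ, (∫ y, (Complex.exp ((t * g y : ℝ) * Complex.I) - 1) ∂ρ).re
      = - ∫ y, (1 - Real.cos (t * g y)) ∂ρ := by
    intro t
    rw [← integral_neg]
    have := integral_re (hint t)
    simp only [RCLike.re_to_complex] at this
    rw [← this]
    simp [Complex.exp_ofReal_mul_I_re, -Complex.ofReal_mul]
  have him : ∀ t : ℝ, (∫ y, (Complex.exp ((t * g y : ℝ) * Complex.I) - 1) ∂ρ).im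
      = ∫ y, Real.sin (t * g y) ∂ρ := by
    intro t
    have := integral_im (hint t)
    simp only [RCLike.im_to_complex] at this
    rw [← this]
    simp [Complex.exp_ofReal_mul_I_im, -Complex.ofReal_mul]
  have hcosi : ∀ t : ℝ, Integrable (fun x => Real.cos (t * f x)) μ := by
    intro t
    have := (hintμ t).re
    simpa [Complex.exp_ofReal_mul_I_re, -Complex.ofReal_mul] using this
  have hreμ : ∀ t : ℝ, (∫ x, Complex.exp ((t * f x : ℝ) * Complex.I) ∂μ).re
      = 1 - ∫ x, (1 - Real.cos (t * f x)) ∂μ := by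
    intro t
    rw [integral_sub (integrable_const _) (hcosi t)]
    have := integral_re (hintμ t)
    simp only [RCLike.re_to_complex] at this
    rw [← this]
    simp [Complex.exp_ofReal_mul_I_re, -Complex.ofReal_mul]
  have himμ : ∀ t : ℝ, (∫ x, Complex.exp ((t * f x : ℝ) * Complex.I) ∂μ).im
      = ∫ x, Real.sin (t * f x) ∂μ := by
    intro t
    have := integral_im (hintμ t)
    simp only [RCLike.im_to_complex] at this
    rw [← this]
    simp [Complex.exp_ofReal_mul_I_im, -Complex.ofReal_mul]
  set R : ℝ → ℝ := fun t => - ∫ y, (1 - Real.cos (t * g y)) ∂ρ with hR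
  set J : ℝ → ℝ := fun t => t * a + ∫ y, Real.sin (t * g y) ∂ρ with hJ
  have k1 : ∀ t, ∫ x, Real.sin (t * f x) ∂μ = Real.exp (R t) * Real.sin (J t) := by
    intro t
    rw [← himμ, hchar, Complex.exp_im, Complex.add_re, Complex.add_im, hre, him]
    simp [hR, hJ, -Complex.ofReal_mul]
  have k2 : ∀ t, ∫ x, (1 - Real.cos (t * f x)) ∂μ = 1 - Real.exp (R t) * Real.cos (J t) := by
    intro t
    have := hreμ t
    rw [hchar, Complex.exp_re, Complex.add_re, Complex.add_im, hre, him] at this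
    simp [-Complex.ofReal_mul] at this
    simp only [hR, hJ]
    linarith
  have l1 := lim_sin ρ g hg hg1
  have l2 := lim_cos ρ g hg hg2
  obtain ⟨m1, m2⟩ := lim_main (R := fun n => R (tt n)) (J := fun n => J (tt n))
    (v := ∫ y, g y ^ 2 ∂ρ) (M := a + ∫ y, g y ∂ρ)
    (by simpa [hR] using l2)
    (by
      refine (l1.const_add a).congr (fun n => ?_)
      have := (tt_pos n).ne'
      simp only [hJ]
      field_simp)
  simp_rw [← k1] at m1
  simp_rw [← k2] at m2
  have i2 := fatou_cos μ f hf _ m2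
  have i1 : Integrable f μ :=
    ((memLp_two_iff_integrable_sq hf.aestronglyMeasurable).2 i2).integrable (by norm_num)
  exact ⟨i2, i1, tendsto_nhds_unique (lim_sin μ f hf i1) m1,
    tendsto_nhds_unique (lim_cos μ f hf i2) m2⟩

lemma image_exp_neg : Set.image (fun u : ℝ => Real.exp (-u)) (Set.Ioi 0) = Set.Ioo 0 1 := by
  ext r
  constructor
  · rintro ⟨u, hu, rfl⟩
    exact ⟨Real.exp_pos _, by simpa using hu⟩
  · rintro ⟨h0, h1⟩
    exact ⟨-Real.log r, by simpa using Real.log_neg h0 h1, by simp [Real.exp_log h0]⟩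

lemma gamma_int (α : ℝ) (hα : 0 < α) (k : ℕ) (hk : 0 < k) :
    ∫ r in Set.Ioo (0 : ℝ) 1, ((-Real.log r) ^ (α - 1) * r⁻¹) * r ^ k
      = Real.Gamma α / (k : ℝ) ^ α := by
  rw [← image_exp_neg, integral_image_eq_integral_abs_deriv_smul
    (f' := fun u => -Real.exp (-u)) measurableSet_Ioi]
  · have hk' : (0 : ℝ) < k := by exact_mod_cast hk
    have := Real.integral_rpow_mul_exp_neg_mul_Ioi hα hk'
    rw [one_div, Real.inv_rpow hk'.le, inv_mul_eq_div] at this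
    rw [← this]
    refine setIntegral_congr_fun measurableSet_Ioi (fun u _ => ?_)
    have e : Real.exp (-u) ≠ 0 := (Real.exp_pos _).ne'
    simp only [abs_neg, abs_of_pos (Real.exp_pos _), Real.log_exp, neg_neg, smul_eq_mul]
    rw [← Real.exp_nat_mul, show (k : ℝ) * -u = -(k * u) by ring]
    field_simp
  · intro u _
    have := ((hasDerivAt_id u).neg.exp).hasDerivWithinAt (s := Set.Ioi 0)
    simpa using this
  · intro u _ v _ h
    simpa using h

lemma gamma_integrable (α : ℝ) (hα : 0 < α) (k : ℕ) (hk : 0 < k) :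
    Integrable (fun r => ((-Real.log r) ^ (α - 1) * r⁻¹) * r ^ k)
      (volume.restrict (Set.Ioo (0 : ℝ) 1)) := by
  by_contra h
  have := gamma_int α hα k hk
  rw [integral_undef h] at this
  have h2 := Real.Gamma_pos_of_pos hα
  have hk' : (0 : ℝ) < k := by exact_mod_cast hk
  have : 0 < Real.Gamma α / (k : ℝ) ^ α := by positivity
  linarith

/-- radial measure -/
noncomputable def KK (α : ℝ) : Measure ℝ :=
  (volume.restrict (Set.Ioo (0 : ℝ) 1)).withDensity
    (fun r => ENNReal.ofReal ((-Real.log r) ^ (α - 1) * r⁻¹))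

instance (α : ℝ) : SFinite (KK α) := by unfold KK; infer_instance

lemma KK_meas (α : ℝ) :
    Measurable (fun r : ℝ => ENNReal.ofReal ((-Real.log r) ^ (α - 1) * r⁻¹)) := by
  fun_prop

lemma KK_nonneg (α r : ℝ) (hr : r ∈ Set.Ioo (0 : ℝ) 1) :
    0 ≤ (-Real.log r) ^ (α - 1) * r⁻¹ := by
  have := Real.log_neg hr.1 hr.2
  have := hr.1
  exact mul_nonneg (Real.rpow_nonneg (by linarith) _) (by positivity)

lemma KK_integral {E : Type*} [NormedAddCommGroup E] [NormedSpace ℝ E] (α : ℝ) (f : ℝ → E) :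
    ∫ r, f r ∂(KK α) =
      ∫ r in Set.Ioo (0 : ℝ) 1, ((-Real.log r) ^ (α - 1) * r⁻¹) • f r := by
  unfold KK
  rw [integral_withDensity_eq_integral_toReal_smul (KK_meas α) (by simp)]
  refine setIntegral_congr_fun measurableSet_Ioo (fun r hr => ?_)
  simp only [ENNReal.toReal_ofReal (KK_nonneg α r hr)]

lemma KK_integrable (α : ℝ) (hα : 0 < α) (k : ℕ) (hk : 0 < k) :
    Integrable (fun r => r ^ k) (KK α) := by
  unfold KK
  rw [integrable_withDensity_iff_integrable_smul' (KK_meas α) (by simp)]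
  refine (gamma_integrable α hα k hk).congr ?_
  filter_upwards [ae_restrict_mem measurableSet_Ioo] with r hr
  simp only [ENNReal.toReal_ofReal (KK_nonneg α r hr), smul_eq_mul]

lemma KK_pow (α : ℝ) (hα : 0 < α) (k : ℕ) (hk : 0 < k) :
    ∫ r, r ^ k ∂(KK α) = Real.Gamma α / (k : ℝ) ^ α := by
  rw [KK_integral]
  exact gamma_int α hα k hk

lemma directional {d : ℕ} (α : ℝ) (hα : 0 < α)
    (γ : EuclideanSpace ℝ (Fin d))
    (ν : Measure (EuclideanSpace ℝ (Fin d))) [IsFiniteMeasure ν]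
    (hν : MemLp (fun y => y) 2 ν)
    (μ : Measure (EuclideanSpace ℝ (Fin d))) [IsProbabilityMeasure μ]
    (hchar : ∀ z : EuclideanSpace ℝ (Fin d),
      (∫ x, Complex.exp ((⟪z, x⟫ : ℝ) * Complex.I) ∂μ) =
        Complex.exp ((⟪γ, z⟫ : ℝ) * Complex.I +
          ∫ y, (∫ r in Set.Ioo (0 : ℝ) 1,
            (Complex.exp ((r : ℝ) * (⟪z, y⟫ : ℝ) * Complex.I) - 1) *
              (((-Real.log r) ^ (α - 1) * r⁻¹ : ℝ) : ℂ)) ∂ν))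
    (z : EuclideanSpace ℝ (Fin d)) :
    Integrable (fun x => (⟪z, x⟫ : ℝ) ^ 2) μ ∧ Integrable (fun x => (⟪z, x⟫ : ℝ)) μ ∧
    ∫ x, (⟪z, x⟫ : ℝ) ∂μ = ⟪γ, z⟫ + Real.Gamma α * ∫ y, (⟪z, y⟫ : ℝ) ∂ν ∧
    ∫ x, (⟪z, x⟫ : ℝ) ^ 2 ∂μ = (Real.Gamma α / 2 ^ α) * ∫ y, (⟪z, y⟫ : ℝ) ^ 2 ∂ν
      + (⟪γ, z⟫ + Real.Gamma α * ∫ y, (⟪z, y⟫ : ℝ) ∂ν) ^ 2 := by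
  have hz : MemLp (fun y => (⟪z, y⟫ : ℝ)) 2 ν := hν.const_inner z
  have hz2 := hz.integrable_sq
  have hz1 : Integrable (fun y => (⟪z, y⟫ : ℝ)) ν := hz.integrable (by norm_num)
  have K1 := KK_integrable α hα 1 one_pos
  have K2 := KK_integrable α hα 2 two_pos
  have E1 := KK_pow α hα 1 one_pos
  have E2 := KK_pow α hα 2 two_pos
  simp only [pow_one, Nat.cast_one, Real.one_rpow, div_one] at K1 E1
  simp only [Nat.cast_ofNat] at E2
  have g1 : Integrable (fun p : ℝ × EuclideanSpace ℝ (Fin d) => p.1 * (⟪z, p.2⟫ : ℝ))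
    ((KK α).prod ν) := K1.mul_prod hz1
  have g2 : Integrable (fun p : ℝ × EuclideanSpace ℝ (Fin d) => (p.1 * (⟪z, p.2⟫ : ℝ)) ^ 2)
    ((KK α).prod ν) := by
    simpa only [mul_pow] using K2.mul_prod hz2
  have I1 : ∫ p, p.1 * (⟪z, p.2⟫ : ℝ) ∂((KK α).prod ν)
      = Real.Gamma α * ∫ y, (⟪z, y⟫ : ℝ) ∂ν := by
    rw [← E1]
    exact integral_prod_mul (fun r : ℝ => r) (fun y => (⟪z, y⟫ : ℝ))
  have I2 : ∫ p, (p.1 * (⟪z, p.2⟫ : ℝ)) ^ 2 ∂((KK α).prod ν)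
      = (Real.Gamma α / 2 ^ α) * ∫ y, (⟪z, y⟫ : ℝ) ^ 2 ∂ν := by
    rw [← E2]
    simp only [mul_pow]
    exact integral_prod_mul (fun r : ℝ => r ^ 2) (fun y => (⟪z, y⟫ : ℝ) ^ 2)
  rw [← I1, ← I2]
  refine oneD μ ((KK α).prod ν) (fun x => (⟪z, x⟫ : ℝ))
    (fun p => p.1 * (⟪z, p.2⟫ : ℝ)) (by fun_prop) (by fun_prop) g1 g2 _ (fun t => ?_)
  have := hchar (t • z)
  simp only [real_inner_smul_left, real_inner_smul_right] at this
  rw [this, integral_prod_symm]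
  · congr 2
    refine integral_congr_ae ?_
    filter_upwards with y
    rw [KK_integral]
    refine setIntegral_congr_fun measurableSet_Ioo (fun r _ => ?_)
    simp only [Complex.real_smul]
    rw [mul_comm]
    congr 4
    push_cast
    ring
  · refine Integrable.mono' ((g1.const_mul t).abs)
      (Measurable.aestronglyMeasurable (by fun_prop)) ?_
    filter_upwards with y
    have := Real.norm_exp_I_mul_ofReal_sub_one_le (x := t * (y.1 * (⟪z, y.2⟫ : ℝ)))
    rwa [mul_comm Complex.I] at this

/-- Let `μ = L*_α(ν, γ)` on `ℝ^d`, i.e. the probability measure with characteristic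
exponent `C(z) = i⟨γ,z⟩ + ∫ ∫_0^1 (e^{i r⟨z,y⟩} - 1)(-log r)^(α-1) r⁻¹ dr ν(dy)`,
with `ν` finite, `ν({0}) = 0` and `∫ ‖y‖² ν(dy) < ∞`. Then `X ~ μ` has mean
`γ + Γ(α) ∫ y ν(dy)` and covariance matrix `(Γ(α)/2^α) ∫ y yᵀ ν(dy)`. -/
theorem stmt15 {d : ℕ} (α : ℝ) (hα : 0 < α)
    (γ : EuclideanSpace ℝ (Fin d))
    (ν : Measure (EuclideanSpace ℝ (Fin d))) [IsFiniteMeasure ν] (hν0 : ν {0} = 0)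
    (hν2 : (∫⁻ y, ENNReal.ofReal (‖y‖ ^ 2) ∂ν) < ∞)
    (μ : Measure (EuclideanSpace ℝ (Fin d))) [IsProbabilityMeasure μ]
    (hchar : ∀ z : EuclideanSpace ℝ (Fin d),
      (∫ x, Complex.exp ((⟪z, x⟫ : ℝ) * Complex.I) ∂μ) =
        Complex.exp ((⟪γ, z⟫ : ℝ) * Complex.I +
          ∫ y, (∫ r in Set.Ioo (0 : ℝ) 1,
            (Complex.exp ((r : ℝ) * (⟪z, y⟫ : ℝ) * Complex.I) - 1) *
              (((-Real.log r) ^ (α - 1) * r⁻¹ : ℝ) : ℂ)) ∂ν)) :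
    (∫ x, x ∂μ) = γ + Real.Gamma α • (∫ y, y ∂ν) ∧
    ∀ i j : Fin d,
      (∫ x, (x i - (∫ x', x' ∂μ) i) * (x j - (∫ x', x' ∂μ) j) ∂μ) =
        (Real.Gamma α / 2 ^ α) * ∫ y, y i * y j ∂ν := by
  have hν : MemLp (fun y => y) 2 ν := by
    rw [memLp_two_iff_integrable_sq_norm (by fun_prop)]
    refine ⟨by fun_prop, ?_⟩
    rw [hasFiniteIntegral_iff_ofReal (by filter_upwards with x using by positivity)]
    exact hν2
  have D := directional α hα γ ν hν μ hchar
  have hc : ∀ (i : Fin d) (x : EuclideanSpace ℝ (Fin d)),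
      ⟪EuclideanSpace.single i (1 : ℝ), x⟫ = x i := by
    intro i x; simp [EuclideanSpace.inner_single_left]
  have hμi : ∀ i, Integrable (fun x : EuclideanSpace ℝ (Fin d) => x i) μ := by
    intro i
    simpa only [hc] using (D (EuclideanSpace.single i 1)).2.1
  have hνi : ∀ i, Integrable (fun x : EuclideanSpace ℝ (Fin d) => x i) ν := by
    intro i
    have := (hν.integrable (by norm_num)).const_inner (𝕜 := ℝ) (EuclideanSpace.single i (1 : ℝ))
    simpa only [hc] using this
  have hν1 : Integrable (fun y : EuclideanSpace ℝ (Fin d) => y) ν := hν.integrable (by norm_num)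
  have hμ1 : Integrable (fun y : EuclideanSpace ℝ (Fin d) => y) μ := Integrable.of_eval_piLp hμi
  have hmean : (∫ x, x ∂μ) = γ + Real.Gamma α • (∫ y, y ∂ν) := by
    ext i
    have := (D (EuclideanSpace.single i 1)).2.2.1
    rw [real_inner_comm] at this
    simp only [hc] at this
    rw [PiLp.add_apply, PiLp.smul_apply, eval_integral_piLp hμi, eval_integral_piLp hνi, this,
      smul_eq_mul]
  refine ⟨hmean, fun i j => ?_⟩
  set m := ∫ x', x' ∂μ with hm
  have hmz : ∀ z : EuclideanSpace ℝ (Fin d), ∫ x, (⟪z, x⟫ : ℝ) ∂μ = ⟪z, m⟫ :=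
    fun z => integral_inner hμ1 z
  have hq : ∀ z : EuclideanSpace ℝ (Fin d), Integrable (fun x => (⟪z, x⟫ - ⟪z, m⟫ : ℝ) ^ 2) μ ∧
      ∫ x, (⟪z, x⟫ - ⟪z, m⟫ : ℝ) ^ 2 ∂μ
        = (Real.Gamma α / 2 ^ α) * ∫ y, (⟪z, y⟫ : ℝ) ^ 2 ∂ν := by
    intro z
    obtain ⟨d1, d2, d3, d4⟩ := D z
    have e : ∀ x : EuclideanSpace ℝ (Fin d), (⟪z, x⟫ - ⟪z, m⟫ : ℝ) ^ 2
        = ⟪z, x⟫ ^ 2 - (2 * ⟪z, m⟫) * ⟪z, x⟫ + ⟪z, m⟫ ^ 2 := fun x => by ring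
    simp_rw [e]
    have i2 := d2.const_mul (2 * (⟪z, m⟫ : ℝ))
    have i3 : Integrable (fun x => (⟪z, x⟫ : ℝ) ^ 2 - (2 * ⟪z, m⟫) * ⟪z, x⟫) μ := d1.sub i2
    refine ⟨i3.add (integrable_const _), ?_⟩
    rw [integral_add i3 (integrable_const _), integral_sub d1 i2, integral_const_mul,
      d4, ← d3, hmz]
    simp
    ring
  have hνq : ∀ z : EuclideanSpace ℝ (Fin d), Integrable (fun x => (⟪z, x⟫ : ℝ) ^ 2) ν :=
    fun z => (hν.const_inner z).integrable_sq
  set a : EuclideanSpace ℝ (Fin d) := EuclideanSpace.single i 1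
  set b : EuclideanSpace ℝ (Fin d) := EuclideanSpace.single j 1
  have e1 : ∀ x : EuclideanSpace ℝ (Fin d), (x i - m i) * (x j - m j)
      = (1 / 4) * ((⟪a + b, x⟫ - ⟪a + b, m⟫ : ℝ) ^ 2 - (⟪a - b, x⟫ - ⟪a - b, m⟫ : ℝ) ^ 2) := by
    intro x
    simp only [inner_add_left, inner_sub_left, a, b, hc]
    ring
  have e2 : ∀ x : EuclideanSpace ℝ (Fin d), x i * x j
      = (1 / 4) * ((⟪a + b, x⟫ : ℝ) ^ 2 - (⟪a - b, x⟫ : ℝ) ^ 2) := by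
    intro x
    simp only [inner_add_left, inner_sub_left, a, b, hc]
    ring
  simp_rw [e1, e2]
  rw [integral_const_mul, integral_const_mul, integral_sub (hq _).1 (hq _).1,
    integral_sub (hνq _) (hνq _), (hq _).2, (hq _).2]
  ring
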